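/- If a filtered group G ⊆ S_∞ (a union of subgroups G_k ⊆ S_k with G_k × G_l ⊆ G_{k+l} under concatenation) is weakly saturated and |G_5| > 1, then G equals S_∞ or S_∞^*. -/

import Mathlib

/-- Concatenation of permutations: `S_k × S_l → S_{k+l}`. -/
def concatPerm {k l : ℕ} (σ : Equiv.Perm (Fin k)) (π : Equiv.Perm (Fin l)) :
    Equiv.Perm (Fin (k + l)) :=
  finSumFinEquiv.permCongr (σ.sumCongr π)

/-
A nontrivial element `f` with least moved point `a` and greatest moved point `b` shares exactly one
moved point with its translate by `b - a`, so the commutator of the two is a 3-cycle. Every gap of a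
3-cycle that exceeds two contains an adjacent pair of fixed points; deleting such pairs leaves four
3-cycles, each of which leads to `(0 1)` or `(0 2)`. The translates of `(0 2)` generate all finitely
supported permutations preserving parity, and any further element yields all transpositions.
-/

open Equiv Perm MulAction
open scoped commutatorElement

section ViaEmbedding

variable {α β γ : Type*}

lemma viaEmbedding_eq_iff {σ : Perm α} {ι : α ↪ β} {f : Perm β} :
    σ.viaEmbedding ι = f ↔ (∀ x, f (ι x) = ι (σ x)) ∧ ∀ y ∉ Set.range ι, f y = y := by
  constructor
  · rintro rfl
    exact ⟨viaEmbedding_apply σ ι, viaEmbedding_apply_of_notMem σ ι⟩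
  · rintro ⟨hrange, hcompl⟩
    ext y
    by_cases hy : y ∈ Set.range ι
    · obtain ⟨x, rfl⟩ := hy
      rw [viaEmbedding_apply, hrange]
    · rw [viaEmbedding_apply_of_notMem σ ι y hy, hcompl y hy]

lemma viaEmbedding_viaEmbedding (σ : Perm α) (ι : α ↪ β) (κ : β ↪ γ) :
    (σ.viaEmbedding ι).viaEmbedding κ = σ.viaEmbedding (ι.trans κ) := by
  refine viaEmbedding_eq_iff.2 ⟨fun y ↦ ?_, fun z hz ↦ ?_⟩
  · by_cases hy : y ∈ Set.range ι
    · obtain ⟨x, rfl⟩ := hy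
      rw [viaEmbedding_apply, ← ι.trans_apply, viaEmbedding_apply, ι.trans_apply]
    · rw [viaEmbedding_apply_of_notMem σ ι y hy, viaEmbedding_apply_of_notMem]
      rintro ⟨x, hx⟩
      exact hy ⟨x, κ.injective hx⟩
  · refine viaEmbedding_apply_of_notMem _ _ _ ?_
    rintro ⟨x, rfl⟩
    exact hz ⟨ι x, rfl⟩

lemma viaEmbedding_mul (σ τ : Perm α) (ι : α ↪ β) :
    (σ * τ).viaEmbedding ι = σ.viaEmbedding ι * τ.viaEmbedding ι :=
  map_mul (viaEmbeddingHom ι) σ τ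

lemma viaEmbedding_swap [DecidableEq α] [DecidableEq β] (ι : α ↪ β) (a b : α) :
    (swap a b).viaEmbedding ι = swap (ι a) (ι b) := by
  refine viaEmbedding_eq_iff.2 ⟨fun x ↦ ι.injective.swap_apply a b x, fun y hy ↦ ?_⟩
  exact swap_apply_of_ne_of_ne (fun h ↦ hy ⟨a, h.symm⟩) (fun h ↦ hy ⟨b, h.symm⟩)

lemma exists_viaEmbedding_eq {ι : α ↪ β} {f : Perm β} (hf : ∀ y ∉ Set.range ι, f y = y) :
    ∃ σ : Perm α, σ.viaEmbedding ι = f := by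
  have hmem (y : β) : f y ∈ Set.range ι ↔ y ∈ Set.range ι := by
    refine not_iff_not.1 ⟨fun h ↦ ?_, fun h ↦ by rwa [hf y h]⟩
    rwa [← f.injective (hf (f y) h)]
  let e := Equiv.ofInjective ι ι.injective
  refine ⟨e.symm.permCongr (f.subtypePerm hmem), viaEmbedding_eq_iff.2 ⟨fun x ↦ ?_, hf⟩⟩
  exact (congrArg Subtype.val (e.apply_symm_apply ⟨f (ι x), (hmem _).2 ⟨x, rfl⟩⟩)).symm

lemma finite_compl_fixedBy_viaEmbedding [Finite α] (σ : Perm α) (ι : α ↪ β) :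
    (fixedBy β (σ.viaEmbedding ι))ᶜ.Finite := by
  refine (Set.finite_range ι).subset (Set.compl_subset_comm.1 fun y hy ↦ ?_)
  exact viaEmbedding_apply_of_notMem σ ι y hy

end ViaEmbedding

section Swap

variable {α : Type*} [DecidableEq α]

/- Write `f = (b  f b) * f₀`; then `f₀` is disjoint from `s`, so the commutator is the product of
`(b  f b)` with its conjugate by `s`. -/
lemma commutatorElement_eq_swap_mul_swap {f s : Perm α} {b : α} (hb : f b ≠ b)
    (hfs : ∀ x ≠ b, f x = x ∨ s x = x) : ⁅f, s⁆ = swap b (f b) * swap (f b) (s b) := by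
  set t := swap b (f b) with ht
  have hsfb : s (f b) = f b := (hfs _ hb).resolve_left fun h ↦ hb (f.injective h)
  have hdisj : Disjoint (t * f) s := by
    intro x
    rcases eq_or_ne x b with rfl | hxb
    · exact .inl (swap_apply_right _ _)
    · refine (hfs x hxb).imp_left fun hx ↦ ?_
      rw [Perm.mul_apply, hx, ht, swap_apply_of_ne_of_ne hxb]
      rintro rfl
      exact hb (f.injective hx)
  have hconj : s * t * s⁻¹ = swap (f b) (s b) := by
    rw [ht, ← swap_apply_apply, hsfb, swap_comm]
  calc ⁅f, s⁆ = t * ((t * f) * s) * (t * f)⁻¹ * t * s⁻¹ := by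
        rw [commutatorElement_def]; simp [mul_assoc, ht]
    _ = t * (s * (t * f)) * (t * f)⁻¹ * t * s⁻¹ := by rw [hdisj.commute.eq]
    _ = t * (s * t * s⁻¹) := by group
    _ = t * swap (f b) (s b) := by rw [hconj]

lemma mem_of_forall_swap_mem {H : Subgroup (Perm α)} {f : Perm α} (hfin : (fixedBy α f)ᶜ.Finite)
    (hswap : ∀ x, swap x (f x) ∈ H) : f ∈ H := by
  have hle : Subgroup.closure {g ∈ H | g.IsSwap} ≤ H := (Subgroup.closure_le H).2 fun g hg ↦ hg.1
  refine hle ((mem_closure_isSwap fun g hg ↦ hg.2).2 ⟨hfin, fun x ↦ ?_⟩)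
  by_cases hx : f x = x
  · rw [hx]
    exact mem_orbit_self x
  · exact ⟨⟨_, Subgroup.subset_closure ⟨hswap x, x, f x, Ne.symm hx, rfl⟩⟩, swap_apply_left _ _⟩

end Swap

section LinearOrder

variable {α : Type*} [LinearOrder α] {f : Perm α} {a : α}

lemma lt_apply_of_isLeast_compl_fixedBy (ha : IsLeast (fixedBy α f)ᶜ a) : a < f a :=
  (ha.2 fun h ↦ ha.1 (f.injective h)).lt_of_ne' ha.1

lemma apply_lt_of_isGreatest_compl_fixedBy (ha : IsGreatest (fixedBy α f)ᶜ a) : f a < a :=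
  (ha.2 fun h ↦ ha.1 (f.injective h)).lt_of_ne ha.1

end LinearOrder

/-- The translate of `f` by `d`: the stable form of concatenating with `1 ∈ S_d` on the left. -/
noncomputable def shift (d : ℕ) (f : Perm ℕ) : Perm ℕ := f.viaEmbedding (addLeftEmbedding d)

lemma shift_add_apply (d : ℕ) (f : Perm ℕ) (x : ℕ) : shift d f (d + x) = d + f x :=
  viaEmbedding_apply f _ x

lemma shift_apply_of_lt {d x : ℕ} (f : Perm ℕ) (hx : x < d) : shift d f x = x :=
  viaEmbedding_apply_of_notMem f _ x fun ⟨y, hy⟩ ↦ by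
    rw [addLeftEmbedding_apply] at hy; omega

lemma shift_mul (d : ℕ) (f g : Perm ℕ) : shift d (f * g) = shift d f * shift d g :=
  viaEmbedding_mul f g _

lemma shift_swap (d a b : ℕ) : shift d (swap a b) = swap (d + a) (d + b) :=
  viaEmbedding_swap _ a b

lemma shift_shift (d e : ℕ) (f : Perm ℕ) : shift d (shift e f) = shift (d + e) f := by
  rw [shift, shift, viaEmbedding_viaEmbedding, shift]
  congr 1
  ext x
  simp [add_assoc]

/-- The increasing enumeration of `ℕ` without `c` and `c + 1`. -/
def skipTwo (c : ℕ) : ℕ ↪o ℕ :=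
  OrderEmbedding.ofStrictMono (fun x ↦ if x < c then x else x + 2) fun x y hxy ↦ by
    grind

lemma skipTwo_apply (c x : ℕ) : skipTwo c x = if x < c then x else x + 2 := rfl

lemma skipTwo_ne (c x : ℕ) : skipTwo c x ≠ c ∧ skipTwo c x ≠ c + 1 := by
  grind [skipTwo_apply]

lemma skipTwo_lt_add_two_iff {c k x : ℕ} (hc : c ≤ k) : skipTwo c x < k + 2 ↔ x < k := by
  grind [skipTwo_apply]

/-- `g` is the permutation `f^{(i,i+1)}` for some `i` with `f (i + 1) = f i ± 1`; here `c` is the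
smaller of the two deleted values. -/
def IsPairDeletion (f g : Perm ℕ) : Prop :=
  ∃ i c, (f i = c ∧ f (i + 1) = c + 1 ∨ f i = c + 1 ∧ f (i + 1) = c) ∧
    ∀ x, f (skipTwo i x) = skipTwo c (g x)

lemma isPairDeletion_viaEmbedding_skipTwo (i : ℕ) (g : Perm ℕ) :
    IsPairDeletion (g.viaEmbedding (skipTwo i).toEmbedding) g := by
  refine ⟨i, i, .inl ⟨?_, ?_⟩, viaEmbedding_apply g _⟩
  · exact viaEmbedding_apply_of_notMem g _ _ fun ⟨x, hx⟩ ↦ (skipTwo_ne i x).1 hx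
  · exact viaEmbedding_apply_of_notMem g _ _ fun ⟨x, hx⟩ ↦ (skipTwo_ne i x).2 hx

/-- The stable form of weak saturation: the properties of the union in `S_∞`, viewed inside the
permutations of `ℕ`, of a weakly saturated filtered group. -/
structure IsWeaklySaturated (H : Subgroup (Perm ℕ)) : Prop where
  finite_compl_fixedBy : ∀ f ∈ H, (fixedBy ℕ f)ᶜ.Finite
  shift_mem : ∀ d, ∀ f ∈ H, shift d f ∈ H
  mem_of_isPairDeletion : ∀ f ∈ H, ∀ g, IsPairDeletion f g → g ∈ H

/-- The 3-cycle `0 ↦ u + v + 2 ↦ u + 1 ↦ 0`. -/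
def threeCycle (u v : ℕ) : Perm ℕ := swap (u + 1) 0 * swap 0 (u + v + 2)

namespace IsWeaklySaturated

variable {H : Subgroup (Perm ℕ)} (hH : IsWeaklySaturated H)
include hH

lemma mem_of_viaEmbedding_skipTwo_mem (i : ℕ) {g : Perm ℕ}
    (h : g.viaEmbedding (skipTwo i).toEmbedding ∈ H) : g ∈ H :=
  hH.mem_of_isPairDeletion _ h g (isPairDeletion_viaEmbedding_skipTwo i g)

lemma mem_of_shift_two_mul_mem {f : Perm ℕ} : ∀ n, shift (2 * n) f ∈ H → f ∈ H
  | 0, h => by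
    convert h
    exact (viaEmbedding_eq_iff.2 (by simp)).symm
  | n + 1, h => by
    have hskip : (skipTwo 0).toEmbedding = addLeftEmbedding 2 := by
      ext x
      simp [skipTwo_apply, add_comm]
    refine mem_of_shift_two_mul_mem n (hH.mem_of_viaEmbedding_skipTwo_mem 0 ?_)
    rwa [hskip, ← shift, shift_shift, add_comm, ← mul_add_one]

lemma mem_of_shift_mem {d : ℕ} {f : Perm ℕ} (h : shift d f ∈ H) : f ∈ H := by
  refine hH.mem_of_shift_two_mul_mem d ?_
  rw [two_mul, ← shift_shift]
  exact hH.shift_mem d _ h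

lemma exists_threeCycle_mem {f : Perm ℕ} (hf : f ∈ H) (hf1 : f ≠ 1) :
    ∃ u v, threeCycle u v ∈ H := by
  have hne : ((fixedBy ℕ f)ᶜ).Nonempty := by
    rwa [Set.nonempty_compl, ne_eq, fixedBy_eq_univ_iff_eq_one]
  obtain ⟨b, hb⟩ := (hH.finite_compl_fixedBy f hf).bddAbove.exists_isGreatest_of_nonempty hne
  obtain ⟨a, ha⟩ : ∃ a, IsLeast (fixedBy ℕ f)ᶜ a := ⟨_, isLeast_csInf hne⟩
  have hfa : a < f a := lt_apply_of_isLeast_compl_fixedBy ha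
  have hfb : f b < b := apply_lt_of_isGreatest_compl_fixedBy hb
  have hab : a ≤ b := ha.2 hb.1
  set s := shift (b - a) f with hs
  have hsb : s b = b - a + f a := by
    rw [← shift_add_apply, Nat.sub_add_cancel hab]
  have hdisj : ∀ x ≠ b, f x = x ∨ s x = x := by
    intro x hxb
    by_contra! ⟨hfx, hsx⟩
    have hxb : x < b := (hb.2 hfx).lt_of_ne hxb
    rcases lt_or_ge x (b - a) with hx | hx
    · exact hsx (shift_apply_of_lt f hx)
    · obtain ⟨y, rfl⟩ := Nat.exists_eq_add_of_le hx
      rw [hs, shift_add_apply, ne_eq, Nat.add_left_cancel_iff] at hsx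
      have : a ≤ y := ha.2 hsx
      omega
  obtain ⟨u, hu⟩ := Nat.exists_eq_add_of_lt hfb
  obtain ⟨v, hv⟩ := Nat.exists_eq_add_of_lt (show b < s b by omega)
  have hcomm : ⁅f, s⁆ = shift (f b) (threeCycle u v) := by
    rw [commutatorElement_eq_swap_mul_swap hfb.ne hdisj, threeCycle, shift_mul, shift_swap,
      shift_swap]
    congr 2
    omega
  have hsH : s ∈ H := hH.shift_mem _ f hf
  have hmem : ⁅f, s⁆ ∈ H := mul_mem (mul_mem (mul_mem hf hsH) (inv_mem hf)) (inv_mem hsH)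
  exact ⟨u, v, hH.mem_of_shift_mem (hcomm ▸ hmem)⟩

lemma threeCycle_mem_of_add_two_left {u v : ℕ} (h : threeCycle (u + 2) v ∈ H) :
    threeCycle u v ∈ H := by
  refine hH.mem_of_viaEmbedding_skipTwo_mem 1 ?_
  convert h using 1
  simp [threeCycle, viaEmbedding_mul, viaEmbedding_swap, skipTwo_apply, add_right_comm]

lemma threeCycle_mem_of_add_two_right {u v : ℕ} (h : threeCycle u (v + 2) ∈ H) :
    threeCycle u v ∈ H := by
  refine hH.mem_of_viaEmbedding_skipTwo_mem (u + 2) ?_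
  convert h using 1
  simp [threeCycle, viaEmbedding_mul, viaEmbedding_swap, skipTwo_apply, ← add_assoc]

/- In one-line notation, `threeCycle 0 1 = 3 0 2 1`, `threeCycle 1 0 = 3 1 0 2` and
`threeCycle 1 1 = 4 1 0 3 2` contain a pair of adjacent positions with values `c + 1, c`, which is
deleted. For `threeCycle 0 0 = 2 0 1` such a pair appears only in the product with a translate. -/
lemma swap_zero_one_mem_of_threeCycle_zero_zero_mem (h : threeCycle 0 0 ∈ H) : swap 0 1 ∈ H := by
  have hmul : shift 1 (threeCycle 0 0) * threeCycle 0 0 = swap 0 1 * swap 2 3 := by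
    ext x
    simp only [threeCycle, shift_mul, shift_swap]
    match x with
    | 0 | 1 | 2 | 3 | x + 4 => rfl
  refine hH.mem_of_isPairDeletion (swap 0 1 * swap 2 3) (hmul ▸ mul_mem (hH.shift_mem 1 _ h) h) _
    ⟨2, 2, .inr ⟨rfl, rfl⟩, fun x ↦ ?_⟩
  match x with
  | 0 | 1 | x + 2 => rfl

lemma swap_zero_one_mem_of_threeCycle_zero_one_mem (h : threeCycle 0 1 ∈ H) : swap 0 1 ∈ H := by
  refine hH.mem_of_isPairDeletion _ h _ ⟨2, 1, .inr ⟨rfl, rfl⟩, fun x ↦ ?_⟩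
  match x with
  | 0 | 1 | x + 2 => rfl

lemma swap_zero_one_mem_of_threeCycle_one_zero_mem (h : threeCycle 1 0 ∈ H) : swap 0 1 ∈ H := by
  refine hH.mem_of_isPairDeletion _ h _ ⟨1, 0, .inr ⟨rfl, rfl⟩, fun x ↦ ?_⟩
  match x with
  | 0 | 1 | x + 2 => rfl

lemma swap_zero_two_mem_of_threeCycle_one_one_mem (h : threeCycle 1 1 ∈ H) : swap 0 2 ∈ H := by
  refine hH.mem_of_isPairDeletion _ h _ ⟨1, 0, .inr ⟨rfl, rfl⟩, fun x ↦ ?_⟩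
  match x with
  | 0 | 1 | 2 | x + 3 => rfl

lemma swap_zero_two_mem_of_swap_zero_one_mem (h : swap 0 1 ∈ H) : swap 0 2 ∈ H :=
  SubmonoidClass.swap_mem_trans H h (shift_swap 1 0 1 ▸ hH.shift_mem 1 _ h)

lemma swap_zero_two_mem_of_threeCycle_mem : ∀ u v, threeCycle u v ∈ H → swap 0 2 ∈ H
  | 0, 0, h => hH.swap_zero_two_mem_of_swap_zero_one_mem
      (hH.swap_zero_one_mem_of_threeCycle_zero_zero_mem h)
  | 0, 1, h => hH.swap_zero_two_mem_of_swap_zero_one_mem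
      (hH.swap_zero_one_mem_of_threeCycle_zero_one_mem h)
  | 1, 0, h => hH.swap_zero_two_mem_of_swap_zero_one_mem
      (hH.swap_zero_one_mem_of_threeCycle_one_zero_mem h)
  | 1, 1, h => hH.swap_zero_two_mem_of_threeCycle_one_one_mem h
  | u + 2, v, h => swap_zero_two_mem_of_threeCycle_mem u v (hH.threeCycle_mem_of_add_two_left h)
  | u, v + 2, h => swap_zero_two_mem_of_threeCycle_mem u v (hH.threeCycle_mem_of_add_two_right h)

lemma swap_zero_two_mem {f : Perm ℕ} (hf : f ∈ H) (hf1 : f ≠ 1) : swap 0 2 ∈ H := by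
  obtain ⟨u, v, h⟩ := hH.exists_threeCycle_mem hf hf1
  exact hH.swap_zero_two_mem_of_threeCycle_mem u v h

lemma swap_mem_of_even_add (h02 : swap 0 2 ∈ H) {a b : ℕ} (hab : Even (a + b)) :
    swap a b ∈ H := by
  wlog hle : a ≤ b generalizing a b
  · rw [swap_comm]
    exact this (add_comm a b ▸ hab) (le_of_not_ge hle)
  have hswap (n : ℕ) : swap a (a + 2 * n) ∈ H := by
    induction n with
    | zero =>
      rw [mul_zero, add_zero, swap_self]
      exact one_mem H
    | succ n ih =>
      exact SubmonoidClass.swap_mem_trans H ih (shift_swap _ 0 2 ▸ hH.shift_mem (a + 2 * n) _ h02)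
  obtain ⟨n, hn⟩ := (Nat.even_sub hle).2 (Nat.even_add.1 hab).symm
  convert hswap n using 2
  omega

lemma swap_apply_mem (h02 : swap 0 2 ∈ H) {f : Perm ℕ} (hf : f ∈ H) (x : ℕ) :
    swap x (f x) ∈ H := by
  obtain ⟨N, hN⟩ := (hH.finite_compl_fixedBy f hf).bddAbove
  let y := x + 2 * (N + 1)
  have hfy : f y = y := by
    by_contra h
    have : y ≤ N := hN h
    omega
  have hxy : swap x y ∈ H := hH.swap_mem_of_even_add h02 ⟨x + N + 1, by ring⟩
  have hfxy : swap y (f x) ∈ H := by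
    rw [swap_comm, ← hfy, swap_apply_apply]
    exact mul_mem (mul_mem hf hxy) (inv_mem hf)
  exact SubmonoidClass.swap_mem_trans H hxy hfxy

lemma swap_mem_of_not_even_add (h02 : swap 0 2 ∈ H) {f : Perm ℕ} (hf : f ∈ H) {x : ℕ}
    (hx : ¬ Even (x + f x)) (a b : ℕ) : swap a b ∈ H := by
  have heven {c d : ℕ} (hcd : Even (c + d)) : swap c d ∈ H := hH.swap_mem_of_even_add h02 hcd
  have hx_mem (c : ℕ) : swap c x ∈ H := by
    by_cases hc : Even (c + x)
    · exact heven hc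
    · refine SubmonoidClass.swap_mem_trans H (heven (d := f x) ?_)
        (swap_comm x _ ▸ hH.swap_apply_mem h02 hf x)
      grind
  exact SubmonoidClass.swap_mem_trans H (hx_mem a) (swap_comm b x ▸ hx_mem b)

theorem dichotomy (hne : ∃ f ∈ H, f ≠ 1) :
    (∀ f, (fixedBy ℕ f)ᶜ.Finite → f ∈ H) ∨
      ∀ f, (fixedBy ℕ f)ᶜ.Finite → (f ∈ H ↔ ∀ x, Even (x + f x)) := by
  obtain ⟨e, he, he1⟩ := hne
  have h02 : swap 0 2 ∈ H := hH.swap_zero_two_mem he he1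
  by_cases hparity : ∀ f ∈ H, ∀ x, Even (x + f x)
  · refine .inr fun f hfin ↦ ⟨hparity f, fun hf ↦ ?_⟩
    exact mem_of_forall_swap_mem hfin fun x ↦ hH.swap_mem_of_even_add h02 (hf x)
  · push Not at hparity
    obtain ⟨g, hg, x, hx⟩ := hparity
    refine .inl fun f hfin ↦ mem_of_forall_swap_mem hfin fun y ↦ ?_
    exact hH.swap_mem_of_not_even_add h02 hg hx y (f y)

end IsWeaklySaturated

section FilteredGroup

/-- The standard inclusion `S_k → S_∞`, with `S_∞` inside the permutations of `ℕ`. -/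
noncomputable def toPermNat {k : ℕ} : Perm (Fin k) →* Perm ℕ := viaEmbeddingHom Fin.valEmbedding

lemma toPermNat_injective {k : ℕ} : Function.Injective (toPermNat (k := k)) :=
  viaEmbeddingHom_injective _

lemma toPermNat_apply_val {k : ℕ} (σ : Perm (Fin k)) (x : Fin k) : toPermNat σ x = σ x :=
  viaEmbedding_apply σ Fin.valEmbedding x

lemma toPermNat_apply_of_le {k x : ℕ} (σ : Perm (Fin k)) (hx : k ≤ x) : toPermNat σ x = x := by
  refine viaEmbedding_apply_of_notMem σ Fin.valEmbedding x ?_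
  rintro ⟨y, rfl⟩
  exact y.2.not_ge hx

lemma exists_toPermNat_eq {k : ℕ} {f : Perm ℕ} (hf : ∀ x, k ≤ x → f x = x) :
    ∃ σ : Perm (Fin k), toPermNat σ = f :=
  exists_viaEmbedding_eq fun x hx ↦ hf x <| le_of_not_gt fun hlt ↦ hx ⟨⟨x, hlt⟩, rfl⟩

lemma concatPerm_one_eq_viaEmbedding {k l : ℕ} (σ : Perm (Fin k)) :
    concatPerm σ (1 : Perm (Fin l)) = σ.viaEmbedding (Fin.castAddEmb l) := by
  refine (viaEmbedding_eq_iff.2 ⟨fun x ↦ by simp [concatPerm], fun y ↦ ?_⟩).symm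
  cases y using Fin.addCases <;> simp [concatPerm]

lemma one_concatPerm_eq_viaEmbedding {k l : ℕ} (σ : Perm (Fin l)) :
    concatPerm (1 : Perm (Fin k)) σ = σ.viaEmbedding (Fin.natAddEmb k) := by
  refine (viaEmbedding_eq_iff.2 ⟨fun x ↦ by simp [concatPerm], fun y ↦ ?_⟩).symm
  cases y using Fin.addCases <;> simp [concatPerm]

lemma toPermNat_concatPerm_one {k l : ℕ} (σ : Perm (Fin k)) :
    toPermNat (concatPerm σ (1 : Perm (Fin l))) = toPermNat σ := by
  rw [concatPerm_one_eq_viaEmbedding]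
  exact viaEmbedding_viaEmbedding σ _ _

lemma toPermNat_one_concatPerm {k l : ℕ} (σ : Perm (Fin l)) :
    toPermNat (concatPerm (1 : Perm (Fin k)) σ) = shift k (toPermNat σ) := by
  rw [one_concatPerm_eq_viaEmbedding]
  calc (σ.viaEmbedding (Fin.natAddEmb k)).viaEmbedding Fin.valEmbedding
      = σ.viaEmbedding (Fin.valEmbedding.trans (addLeftEmbedding k)) :=
        viaEmbedding_viaEmbedding σ _ _
    _ = shift k (toPermNat σ) := (viaEmbedding_viaEmbedding σ _ _).symm

lemma forall_even_toPermNat_iff {k : ℕ} (σ : Perm (Fin k)) :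
    (∀ x, Even (x + toPermNat σ x)) ↔ ∀ i : Fin k, Even ((i : ℕ) + (σ i : ℕ)) := by
  refine ⟨fun h i ↦ toPermNat_apply_val σ i ▸ h i, fun h x ↦ ?_⟩
  rcases lt_or_ge x k with hx | hx
  · exact toPermNat_apply_val σ ⟨x, hx⟩ ▸ h ⟨x, hx⟩
  · rw [toPermNat_apply_of_le σ hx]
    exact Even.add_self x

/-- A filtered group: `G_k × G_l ⊆ G_{k+l}` under concatenation, and `G_k = G_{k+1} ∩ S_k`. -/
structure IsFilteredGroup (G : (k : ℕ) → Subgroup (Perm (Fin k))) : Prop where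
  concat_mem : ∀ (k l : ℕ) (σ : Perm (Fin k)) (π : Perm (Fin l)),
    σ ∈ G k → π ∈ G l → concatPerm σ π ∈ G (k + l)
  mem_iff_concat_one_mem : ∀ (k : ℕ) (σ : Perm (Fin k)),
    σ ∈ G k ↔ concatPerm σ (1 : Perm (Fin 1)) ∈ G (k + 1)

/-- A weakly saturated filtered group. The deleted permutation `σ^{(i,i+1)}` is the `δ` with
`σ ∘ a = b ∘ δ`, where `a` and `b` enumerate increasingly the positions and the values kept. -/
structure IsWeaklySaturatedFilteredGroup (G : (k : ℕ) → Subgroup (Perm (Fin k))) : Prop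
    extends IsFilteredGroup G where
  deletion_mem : ∀ (k : ℕ) (σ : Perm (Fin (k + 2))), σ ∈ G (k + 2) →
    ∀ i j : Fin (k + 2), (j : ℕ) = (i : ℕ) + 1 →
    ((σ j : ℕ) = (σ i : ℕ) + 1 ∨ (σ j : ℕ) + 1 = (σ i : ℕ)) →
    ∀ (δ : Perm (Fin k)) (a b : Fin k → Fin (k + 2)),
      StrictMono a → StrictMono b →
      (∀ x, a x ≠ i ∧ a x ≠ j) → (∀ x, b x ≠ σ i ∧ b x ≠ σ j) →
      (∀ x, σ (a x) = b (δ x)) → δ ∈ G k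

/-- The union `⋃ G_k ⊆ S_∞`; for a filtered group the supremum is directed. -/
noncomputable def stableUnion (G : (k : ℕ) → Subgroup (Perm (Fin k))) : Subgroup (Perm ℕ) :=
  ⨆ k, (G k).map toPermNat

variable {G : (k : ℕ) → Subgroup (Perm (Fin k))}

namespace IsFilteredGroup

variable (hG : IsFilteredGroup G)
include hG

lemma monotone_map_toPermNat : Monotone fun k ↦ (G k).map toPermNat := by
  refine monotone_nat_of_le_succ fun k ↦ ?_
  rintro _ ⟨σ, hσ, rfl⟩
  exact ⟨_, (hG.mem_iff_concat_one_mem k σ).1 hσ, toPermNat_concatPerm_one σ⟩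

lemma toPermNat_mem_map_iff {k m : ℕ} (hkm : k ≤ m) (σ : Perm (Fin k)) :
    toPermNat σ ∈ (G m).map toPermNat ↔ σ ∈ G k := by
  induction hkm using Nat.decreasingInduction with
  | self => exact Subgroup.mem_map_iff_mem toPermNat_injective
  | of_succ k _ ih => rw [hG.mem_iff_concat_one_mem, ← ih, toPermNat_concatPerm_one]

lemma mem_stableUnion_iff {f : Perm ℕ} :
    f ∈ stableUnion G ↔ ∃ k, f ∈ (G k).map toPermNat :=
  Subgroup.mem_iSup_of_directed hG.monotone_map_toPermNat.directed_le

lemma toPermNat_mem_stableUnion_iff {k : ℕ} (σ : Perm (Fin k)) :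
    toPermNat σ ∈ stableUnion G ↔ σ ∈ G k := by
  refine hG.mem_stableUnion_iff.trans ⟨fun ⟨l, hl⟩ ↦ ?_, fun hσ ↦ ⟨k, σ, hσ, rfl⟩⟩
  exact (hG.toPermNat_mem_map_iff (le_max_left k l) σ).1
    (hG.monotone_map_toPermNat (le_max_right k l) hl)

lemma shift_mem_stableUnion (d : ℕ) {f : Perm ℕ} (hf : f ∈ stableUnion G) :
    shift d f ∈ stableUnion G := by
  obtain ⟨k, σ, hσ, rfl⟩ := hG.mem_stableUnion_iff.1 hf
  rw [← toPermNat_one_concatPerm, hG.toPermNat_mem_stableUnion_iff]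
  exact hG.concat_mem d k 1 σ (one_mem _) hσ

end IsFilteredGroup

namespace IsWeaklySaturatedFilteredGroup

variable (hG : IsWeaklySaturatedFilteredGroup G)
include hG

lemma mem_stableUnion_of_isPairDeletion {f g : Perm ℕ} (hf : f ∈ stableUnion G)
    (hfg : IsPairDeletion f g) : g ∈ stableUnion G := by
  obtain ⟨i, c, hic, hfg⟩ := hfg
  obtain ⟨l, hl⟩ := hG.mem_stableUnion_iff.1 hf
  obtain ⟨k, hik, hlk⟩ : ∃ k, i ≤ k ∧ l ≤ k + 2 := ⟨l + i, by omega, by omega⟩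
  obtain ⟨σ, hσ, rfl⟩ := hG.monotone_map_toPermNat hlk hl
  let i₀ : Fin (k + 2) := ⟨i, by omega⟩
  let i₁ : Fin (k + 2) := ⟨i + 1, by omega⟩
  have hi₀ : toPermNat σ i = σ i₀ := toPermNat_apply_val σ i₀
  have hi₁ : toPermNat σ (i + 1) = σ i₁ := toPermNat_apply_val σ i₁
  have hck : c ≤ k := by omega
  have hgfix (x : ℕ) (hx : k ≤ x) : g x = x := by
    have h := hfg x
    rw [skipTwo_apply, if_neg (by omega), toPermNat_apply_of_le σ (by omega)] at h
    grind [skipTwo_apply]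
  obtain ⟨δ, rfl⟩ := exists_toPermNat_eq hgfix
  rw [hG.toPermNat_mem_stableUnion_iff]
  have hskip_lt {j : ℕ} (hj : j ≤ k) (x : Fin k) : skipTwo j x < k + 2 :=
    (skipTwo_lt_add_two_iff hj).2 x.2
  refine hG.deletion_mem k σ hσ i₀ i₁ rfl (by omega) δ (fun x ↦ ⟨skipTwo i x, hskip_lt hik x⟩)
    (fun x ↦ ⟨skipTwo c x, hskip_lt hck x⟩) (fun x y hxy ↦ (skipTwo i).strictMono hxy)
    (fun x y hxy ↦ (skipTwo c).strictMono hxy) (fun x ↦ ?_) (fun x ↦ ?_) (fun x ↦ ?_)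
  · have := skipTwo_ne i x
    simpa [i₀, i₁, Fin.ext_iff] using this
  · have := skipTwo_ne c x
    simp only [ne_eq, Fin.ext_iff]
    omega
  · ext
    rw [← toPermNat_apply_val, hfg, toPermNat_apply_val]

lemma isWeaklySaturated_stableUnion : IsWeaklySaturated (stableUnion G) where
  finite_compl_fixedBy f hf := by
    obtain ⟨k, σ, -, rfl⟩ := hG.mem_stableUnion_iff.1 hf
    exact finite_compl_fixedBy_viaEmbedding σ _
  shift_mem d f hf := hG.shift_mem_stableUnion d hf
  mem_of_isPairDeletion f hf g hfg := hG.mem_stableUnion_of_isPairDeletion hf hfg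

end IsWeaklySaturatedFilteredGroup

end FilteredGroup

theorem weakly_saturated_filtered_group_dichotomy_general
    {G : (k : ℕ) → Subgroup (Perm (Fin k))} (hG : IsWeaklySaturatedFilteredGroup G)
    (hne : ∃ k, ∃ σ ∈ G k, σ ≠ 1) :
    (∀ (k : ℕ) (σ : Perm (Fin k)), σ ∈ G k) ∨
      ∀ (k : ℕ) (σ : Perm (Fin k)), σ ∈ G k ↔ ∀ i : Fin k, Even ((i : ℕ) + (σ i : ℕ)) := by
  obtain ⟨k, τ, hτ, hτ1⟩ := hne
  have hfin (k : ℕ) (σ : Perm (Fin k)) : (fixedBy ℕ (toPermNat σ))ᶜ.Finite :=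
    finite_compl_fixedBy_viaEmbedding σ _
  have hne' : ∃ f ∈ stableUnion G, f ≠ 1 :=
    ⟨toPermNat τ, (hG.toPermNat_mem_stableUnion_iff τ).2 hτ,
      (map_ne_one_iff _ toPermNat_injective).2 hτ1⟩
  refine (hG.isWeaklySaturated_stableUnion.dichotomy hne').imp (fun h k σ ↦ ?_) (fun h k σ ↦ ?_)
  · exact (hG.toPermNat_mem_stableUnion_iff σ).1 (h _ (hfin k σ))
  · rw [← hG.toPermNat_mem_stableUnion_iff, h _ (hfin k σ), forall_even_toPermNat_iff]

/-- If a filtered group `G ⊆ S_∞` (a union of subgroups `G_k ⊆ S_k` with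
`G_k × G_l ⊆ G_{k+l}` under concatenation, and `G_k = G ∩ S_k` under the
standard inclusions `σ ↦ σ ⊗ 1`) is weakly saturated — whenever `σ ∈ G_k`
satisfies `σ(i+1) = σ(i) ± 1`, the permutation `σ^{(i,i+1)} ∈ S_{k-2}` obtained
by deleting positions `i, i+1` and their images (and relabelling monotonically)
belongs to `G_{k-2}` — and `|G_5| > 1`, then `G` is `S_∞` or `S_∞^*`. -/
theorem weakly_saturated_filtered_group_dichotomy
    (G : (k : ℕ) → Subgroup (Equiv.Perm (Fin k)))
    (hfilt : ∀ (k l : ℕ) (σ : Equiv.Perm (Fin k)) (π : Equiv.Perm (Fin l)),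
      σ ∈ G k → π ∈ G l → concatPerm σ π ∈ G (k + l))
    (hcompat : ∀ (k : ℕ) (σ : Equiv.Perm (Fin k)),
      σ ∈ G k ↔ concatPerm σ (1 : Equiv.Perm (Fin 1)) ∈ G (k + 1))
    (hws : ∀ (k : ℕ) (σ : Equiv.Perm (Fin (k + 2))), σ ∈ G (k + 2) →
      ∀ i j : Fin (k + 2), (j : ℕ) = (i : ℕ) + 1 →
      ((σ j : ℕ) = (σ i : ℕ) + 1 ∨ (σ j : ℕ) + 1 = (σ i : ℕ)) →
      ∀ (δ : Equiv.Perm (Fin k)) (a b : Fin k → Fin (k + 2)),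
        StrictMono a → StrictMono b →
        (∀ x, a x ≠ i ∧ a x ≠ j) → (∀ x, b x ≠ σ i ∧ b x ≠ σ j) →
        (∀ x, σ (a x) = b (δ x)) → δ ∈ G k)
    (h5 : ∃ σ ∈ G 5, σ ≠ 1) :
    (∀ (k : ℕ) (σ : Equiv.Perm (Fin k)), σ ∈ G k) ∨
    (∀ (k : ℕ) (σ : Equiv.Perm (Fin k)),
      σ ∈ G k ↔ ∀ i : Fin k, Even ((i : ℕ) + (σ i : ℕ))) :=
  weakly_saturated_filtered_group_dichotomy_general ⟨⟨hfilt, hcompat⟩, hws⟩ ⟨5, h5⟩
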